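/- Let T > 0, ν > 0, and 2 ≤ p < ∞. Let u : ℝ² × [0,T] → ℝ², ω : ℝ² × [0,T] → ℝ, and θ : ℝ² × [0,T] → ℝ be smooth functions, ℤ²-periodic in x, such that for every t the field u(·,t) is divergence-free, and pointwise on ℝ² × [0,T]: ∂_t ω + u·∇ω = ν ∂₁²ω + ∂₁θ and ∂_t θ + u·∇θ = 0. Then for every t ∈ [0,T]: ‖ω(t)‖_{L^p}² ≤ ‖ω(0)‖_{L^p}² + ((p−1)/(2ν)) ‖θ(0)‖_{L^p}² t, where ‖f‖_{L^p} = (∫_Q |f|^p dx)^{1/p} with Q = [0,1]². -/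

import Mathlib

/-!
Write `D = ∂ₜ + u·∇` for the material derivative and `E(t) = ∫_Q |ω(t)|ᵖ`. Since `u` is
divergence-free and everything is periodic, `d/dt ∫_Q F = ∫_Q D F` for every `C¹` function `F`, and
`D` obeys the chain rule. Hence `∫_Q |θ|ᵖ` is conserved, while
`E' = p ∫_Q |ω|ᵖ⁻² ω (ν ∂₁²ω + ∂₁θ)`. Integrating by parts in `x₁` and completing the square in
`∂₁ω` bounds the last integral by `(p - 1) / (4ν) ∫_Q |ω|ᵖ⁻² θ²`, and Hölder's inequality gives
`E' ≤ p (p - 1) / (4ν) E^(1 - 2/p) ‖θ(0)‖ₚ²`. Formally this says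
`(E^(2/p))' ≤ (p - 1) / (2ν) ‖θ(0)‖ₚ²`, which integrates to the claim.

The exponent `p ≥ 2` enters through the `C¹` regularity of `x ↦ |x|ᵖ⁻² x`, which makes the
integration by parts classical.
-/

open MeasureTheory

/-- Partial derivative in direction `j`. -/
noncomputable def pd (j : Fin 2) (f : (Fin 2 → ℝ) → ℝ) (x : Fin 2 → ℝ) : ℝ :=
  fderiv ℝ f x (Pi.single j 1)

/-- `f` is `ℤ²`-periodic. -/
def Periodic2 (f : (Fin 2 → ℝ) → ℝ) : Prop :=
  ∀ (x : Fin 2 → ℝ) (k : Fin 2 → ℤ), f (x + fun i => (k i : ℝ)) = f x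

/-- The fundamental domain `Q = [0,1]²`. -/
def Q2 : Set (Fin 2 → ℝ) := Set.Icc 0 1

/-- The `Lᵖ` norm over `Q` (for real exponent `p`). -/
noncomputable def lpNorm (p : ℝ) (f : (Fin 2 → ℝ) → ℝ) : ℝ :=
  (∫ x in Q2, |f x| ^ p) ^ (1 / p)

open Set Filter Topology Function

/-! ### One-variable calculus -/

lemma continuous_abs_rpow {r : ℝ} (hr : 0 ≤ r) : Continuous fun x : ℝ => |x| ^ r :=
  continuous_abs.rpow_const fun _ => Or.inr hr

lemma contDiff_abs_rpow {p : ℝ} (hp : 1 < p) : ContDiff ℝ 1 fun x : ℝ => |x| ^ p :=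
  contDiff_norm_rpow hp

lemma hasDerivAt_abs_rpow_mul_self {r : ℝ} (hr : 0 ≤ r) (x : ℝ) :
    HasDerivAt (fun y : ℝ => |y| ^ r * y) ((r + 1) * |x| ^ r) x := by
  have away_from_zero (y : ℝ) (hy : y ≠ 0) :
      HasDerivAt (fun y : ℝ => |y| ^ r * y) ((r + 1) * |y| ^ r) y := by
    have hy' : |y| ≠ 0 := abs_ne_zero.2 hy
    refine (((hasDerivAt_abs hy).rpow_const (Or.inl hy')).mul (hasDerivAt_id' y)).congr_deriv ?_
    rw [Real.rpow_sub_one hy']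
    have sign_mul_self : (SignType.sign y : ℝ) * y = |y| := sign_mul_self y
    field_simp
    linear_combination r * sign_mul_self
  have hcont : Continuous fun y : ℝ => |y| ^ r := continuous_abs_rpow hr
  exact hasDerivAt_of_hasDerivAt_of_ne' away_from_zero (hcont.mul continuous_id).continuousAt
    (hcont.const_mul (r + 1)).continuousAt x

lemma contDiff_abs_rpow_mul_self {r : ℝ} (hr : 0 ≤ r) :
    ContDiff ℝ 1 fun x : ℝ => |x| ^ r * x := by
  have hderiv := hasDerivAt_abs_rpow_mul_self hr
  refine contDiff_one_iff_deriv.2 ⟨fun x => (hderiv x).differentiableAt, ?_⟩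
  rw [funext fun x => (hderiv x).deriv]
  exact (continuous_abs_rpow hr).const_mul (r + 1)

lemma rpow_le_rpow_add_mul_of_pos {E E' : ℝ → ℝ} {a b α K : ℝ} (hab : a ≤ b)
    (hcont : ContinuousOn E (Icc a b)) (hderiv : ∀ t ∈ Ioo a b, HasDerivAt E (E' t) t)
    (hpos : ∀ t ∈ Icc a b, 0 < E t) (hle : ∀ t ∈ Ioo a b, α * E' t ≤ K * E t ^ (1 - α)) :
    E b ^ α ≤ E a ^ α + K * (b - a) := by
  have hderiv_rpow (t : ℝ) (ht : t ∈ Ioo a b) :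
      HasDerivAt (fun s => E s ^ α) (E' t * α * E t ^ (α - 1)) t :=
    (hderiv t ht).rpow_const (Or.inl (hpos t (Ioo_subset_Icc_self ht)).ne')
  have hderiv_le (t : ℝ) (ht : t ∈ Ioo a b) : E' t * α * E t ^ (α - 1) ≤ K := by
    have hEt : 0 < E t := hpos t (Ioo_subset_Icc_self ht)
    calc E' t * α * E t ^ (α - 1) = α * E' t * E t ^ (α - 1) := by ring
      _ ≤ K * E t ^ (1 - α) * E t ^ (α - 1) :=
        mul_le_mul_of_nonneg_right (hle t ht) (Real.rpow_nonneg hEt.le _)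
      _ = K := by
        rw [mul_assoc, ← Real.rpow_add hEt, sub_add_sub_cancel, sub_self, Real.rpow_zero, mul_one]
  have hsub := (convex_Icc a b).image_sub_le_mul_sub_of_deriv_le (f := fun s => E s ^ α) (C := K)
    (hcont.rpow_const fun t ht => Or.inl (hpos t ht).ne')
    (fun t ht => by
      rw [interior_Icc] at ht
      exact (hderiv_rpow t ht).differentiableAt.differentiableWithinAt)
    (fun t ht => by
      rw [interior_Icc] at ht
      exact (hderiv_rpow t ht).deriv.trans_le (hderiv_le t ht))
    a (left_mem_Icc.2 hab) b (right_mem_Icc.2 hab) hab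
  linarith

lemma rpow_le_rpow_add_mul_of_nonneg {E E' : ℝ → ℝ} {a b α K : ℝ} (hab : a ≤ b) (hα : 0 ≤ α)
    (hα' : α ≤ 1) (hK : 0 ≤ K) (hcont : ContinuousOn E (Icc a b))
    (hderiv : ∀ t ∈ Ioo a b, HasDerivAt E (E' t) t) (hnonneg : ∀ t ∈ Icc a b, 0 ≤ E t)
    (hle : ∀ t ∈ Ioo a b, α * E' t ≤ K * E t ^ (1 - α)) :
    E b ^ α ≤ E a ^ α + K * (b - a) := by
  -- `E ^ α` need not be differentiable where `E` vanishes, so `E` is approximated by `E + ε`.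
  have shifted (ε : ℝ) (hε : 0 < ε) : (E b + ε) ^ α ≤ (E a + ε) ^ α + K * (b - a) := by
    refine rpow_le_rpow_add_mul_of_pos (E := fun t => E t + ε) hab (hcont.add continuousOn_const)
      (fun t ht => (hderiv t ht).add_const ε) (fun t ht => by linarith [hnonneg t ht])
      fun t ht => (hle t ht).trans ?_
    have hEt := hnonneg t (Ioo_subset_Icc_self ht)
    gcongr
    linarith
  have shift_tendsto (c : ℝ) : Tendsto (fun ε : ℝ => (c + ε) ^ α) (𝓝[>] 0) (𝓝 (c ^ α)) := by
    have hc : Continuous fun ε : ℝ => (c + ε) ^ α :=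
      (continuous_const_add c).rpow_const fun _ => Or.inr hα
    simpa only [add_zero] using hc.continuousWithinAt.tendsto (x := 0) (s := Ioi 0)
  refine le_of_tendsto_of_tendsto (shift_tendsto (E b))
    ((shift_tendsto (E a)).add_const (K * (b - a))) ?_
  filter_upwards [self_mem_nhdsWithin] with ε hε using shifted ε hε

/-! ### Integrals -/

lemma integral_abs_rpow_mul_abs_rpow_le {X : Type*} [MeasurableSpace X] {μ : Measure X}
    {p q : ℝ} (hq : 0 < q) (hqp : q ≤ p) {f g : X → ℝ} (hf : MemLp f (ENNReal.ofReal p) μ)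
    (hg : MemLp g (ENNReal.ofReal p) μ) :
    ∫ x, |f x| ^ (p - q) * |g x| ^ q ∂μ ≤
      (∫ x, |f x| ^ p ∂μ) ^ (1 - q / p) * (∫ x, |g x| ^ p ∂μ) ^ (q / p) := by
  rcases hqp.eq_or_lt with rfl | hqp
  · simp [hq.ne']
  have hp : 0 < p := hq.trans hqp
  have memLp_rpow {h : X → ℝ} {r : ℝ} (hh : MemLp h (ENNReal.ofReal p) μ) (hr : 0 < r) :
      MemLp (fun x => |h x| ^ r) (ENNReal.ofReal (p / r)) μ := by
    simpa only [ENNReal.toReal_ofReal hr.le, ENNReal.ofReal_div_of_pos hr, Real.norm_eq_abs]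
      using hh.norm_rpow_div (ENNReal.ofReal r)
  have rpow_rpow_div (h : X → ℝ) {r : ℝ} (hr : 0 < r) (x : X) :
      (|h x| ^ r) ^ (p / r) = |h x| ^ p := by
    rw [← Real.rpow_mul (abs_nonneg _), mul_div_cancel₀ _ hr.ne']
  have hpq : 0 < p - q := sub_pos.2 hqp
  have hconj : (p / (p - q)).HolderConjugate (p / q) :=
    ⟨by field_simp; ring, div_pos hp hpq, div_pos hp hq⟩
  have holder := integral_mul_le_Lp_mul_Lq_of_nonneg hconj
    (ae_of_all μ fun x => Real.rpow_nonneg (abs_nonneg (f x)) (p - q))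
    (ae_of_all μ fun x => Real.rpow_nonneg (abs_nonneg (g x)) q)
    (memLp_rpow hf hpq) (memLp_rpow hg hq)
  simpa only [rpow_rpow_div f hpq, rpow_rpow_div g hq, one_div_div, sub_div, div_self hp.ne']
    using holder

lemma integral_abs_rpow_nonneg {X : Type*} [MeasurableSpace X] {μ : Measure X} (f : X → ℝ)
    (p : ℝ) : 0 ≤ ∫ x, |f x| ^ p ∂μ :=
  integral_nonneg fun x => Real.rpow_nonneg (abs_nonneg (f x)) p

lemma memLp_Icc_of_continuous {X : Type*} [TopologicalSpace X] [T2Space X] [Preorder X]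
    [CompactIccSpace X] [MeasurableSpace X] [OpensMeasurableSpace X] {μ : Measure X}
    [IsFiniteMeasureOnCompacts μ] {p : ℝ} (hp : 0 < p) {f : X → ℝ} (hf : Continuous f)
    (a b : X) : MemLp f (ENNReal.ofReal p) (μ.restrict (Icc a b)) := by
  have hint : IntegrableOn (fun x => |f x| ^ p) (Icc a b) μ :=
    ((continuous_abs_rpow hp.le).comp hf).integrableOn_Icc
  rw [← integrable_norm_rpow_iff hf.integrableOn_Icc.aestronglyMeasurable
    (ENNReal.ofReal_pos.2 hp).ne' ENNReal.ofReal_ne_top, ENNReal.toReal_ofReal hp.le]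
  exact hint

lemma hasDerivAt_setIntegral_of_continuous {X G : Type*} [TopologicalSpace X] [T2Space X]
    [MeasurableSpace X] [OpensMeasurableSpace X] [NormedAddCommGroup G] [NormedSpace ℝ G]
    [SecondCountableTopologyEither X G] {μ : Measure X} [IsFiniteMeasureOnCompacts μ] {s : Set X}
    (hs : IsCompact s) {F F' : ℝ → X → G} (hF : ∀ t, Continuous (F t))
    (hF' : Continuous (uncurry F')) (hderiv : ∀ t x, HasDerivAt (fun r => F r x) (F' t x) t)
    (t : ℝ) : HasDerivAt (fun r => ∫ x in s, F r x ∂μ) (∫ x in s, F' t x ∂μ) t := by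
  have hint {f : X → G} (hf : Continuous f) : IntegrableOn f s μ :=
    hf.continuousOn.integrableOn_compact hs
  obtain ⟨C, hC⟩ := ((isCompact_Icc (a := t - 1) (b := t + 1)).prod hs).exists_bound_of_continuousOn
    hF'.continuousOn
  refine (hasDerivAt_integral_of_dominated_loc_of_deriv_le (s := Icc (t - 1) (t + 1))
    (bound := fun _ => C) (Icc_mem_nhds (by linarith) (by linarith))
    (Eventually.of_forall fun r => (hint (hF r)).aestronglyMeasurable) (hint (hF t))
    (hint (hF'.comp (Continuous.prodMk_right t))).aestronglyMeasurable ?_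
    (integrableOn_const hs.measure_ne_top) (ae_of_all _ fun x r _ => hderiv r x)).2
  exact (ae_restrict_iff' hs.measurableSet).2 (ae_of_all μ fun x hx r hr => hC (r, x) ⟨hr, hx⟩)

/-! ### Calculus on the torus -/

section Torus

variable {d : ℕ}

/-- `f` is `ℤᵈ`-periodic, that is, a function on the torus `ℝᵈ/ℤᵈ`; it suffices to ask for
invariance under the translations by the standard basis vectors. -/
def UnitPeriodic {β : Type*} (f : (Fin d → ℝ) → β) : Prop :=
  ∀ i, Periodic f (Pi.single i 1)

/-- The partial derivative `∂ᵢ f` in dimension `d`; it is `0` where `f` is not differentiable. -/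
noncomputable def partialDeriv (i : Fin d) (f : (Fin d → ℝ) → ℝ) (x : Fin d → ℝ) : ℝ :=
  fderiv ℝ f x (Pi.single i 1)

/-- The divergence `∑ⱼ ∂ⱼ vʲ` of a vector field on `ℝᵈ`. -/
noncomputable def divergence (v : (Fin d → ℝ) → Fin d → ℝ) (x : Fin d → ℝ) : ℝ :=
  ∑ j, partialDeriv j (fun y => v y j) x

/-- The derivative `∂ₜ f + u·∇f` of a time-dependent function along the flow of the
time-dependent vector field `u`. -/
noncomputable def materialDeriv (u : ℝ → (Fin d → ℝ) → Fin d → ℝ) (f : ℝ → (Fin d → ℝ) → ℝ)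
    (t : ℝ) (x : Fin d → ℝ) : ℝ :=
  deriv (fun s => f s x) t + ∑ j, u t x j * partialDeriv j (f t) x

lemma Periodic2.unitPeriodic {f : (Fin 2 → ℝ) → ℝ} (hf : Periodic2 f) : UnitPeriodic f := by
  intro i x
  rw [← hf x (Pi.single i 1)]
  congr 2
  ext j
  rw [Pi.apply_single (fun _ (k : ℤ) => (k : ℝ)) (fun _ => Int.cast_zero), Int.cast_one]

lemma UnitPeriodic.partialDeriv {f : (Fin d → ℝ) → ℝ} (hf : UnitPeriodic f) (i : Fin d) :
    UnitPeriodic (partialDeriv i f) := by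
  intro j x
  unfold _root_.partialDeriv
  rw [← fderiv_comp_add_right, (hf j).funext]

lemma contDiff_partialDeriv {n : WithTop ℕ∞} {f : (Fin d → ℝ) → ℝ} (hf : ContDiff ℝ (n + 1) f)
    (i : Fin d) : ContDiff ℝ n (partialDeriv i f) :=
  (hf.fderiv_right le_rfl).clm_apply contDiff_const

lemma continuous_partialDeriv {f : (Fin d → ℝ) → ℝ} (hf : ContDiff ℝ 1 f) (i : Fin d) :
    Continuous (partialDeriv i f) :=
  (contDiff_partialDeriv (n := 0) hf i).continuous

section Rules

variable {f g : (Fin d → ℝ) → ℝ} {x : Fin d → ℝ}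

lemma partialDeriv_add (hf : DifferentiableAt ℝ f x) (hg : DifferentiableAt ℝ g x) (i : Fin d) :
    partialDeriv i (fun y => f y + g y) x = partialDeriv i f x + partialDeriv i g x := by
  simp only [partialDeriv, fderiv_fun_add hf hg, add_apply]

lemma partialDeriv_const_mul (c : ℝ) (hf : DifferentiableAt ℝ f x) (i : Fin d) :
    partialDeriv i (fun y => c * f y) x = c * partialDeriv i f x := by
  simp only [partialDeriv, fderiv_const_mul hf, smul_apply, smul_eq_mul]

lemma partialDeriv_mul (hf : DifferentiableAt ℝ f x) (hg : DifferentiableAt ℝ g x) (i : Fin d) :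
    partialDeriv i (fun y => f y * g y) x =
      f x * partialDeriv i g x + partialDeriv i f x * g x := by
  simp only [partialDeriv, fderiv_fun_mul hf hg, add_apply, smul_apply, smul_eq_mul, mul_comm (g x)]

lemma partialDeriv_comp {φ : ℝ → ℝ} {φ' : ℝ} (hφ : HasDerivAt φ φ' (f x))
    (hf : DifferentiableAt ℝ f x) (i : Fin d) :
    partialDeriv i (fun y => φ (f y)) x = φ' * partialDeriv i f x := by
  have hcomp : HasFDerivAt (fun y => φ (f y)) (φ' • fderiv ℝ f x) x :=
    hφ.comp_hasFDerivAt x hf.hasFDerivAt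
  simp only [partialDeriv, hcomp.fderiv, smul_apply, smul_eq_mul]

end Rules

lemma integral_divergence_eq_zero {v : (Fin d → ℝ) → Fin d → ℝ} (hv : ContDiff ℝ 1 v)
    (hvp : UnitPeriodic v) : ∫ x in Icc 0 1, divergence v x = 0 := by
  rcases d with _ | d
  · simp [divergence]
  have hvj (j : Fin (d + 1)) : ContDiff ℝ 1 fun y => v y j := contDiff_pi.1 hv j
  have gauss := integral_divergence_of_hasFDerivAt_off_countable' (0 : Fin (d + 1) → ℝ) 1
    zero_le_one (fun j y => v y j) (fun j => fderiv ℝ fun y => v y j) ∅ countable_empty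
    (fun j => (hvj j).continuous.continuousOn)
    (fun x _ j => ((hvj j).differentiable one_ne_zero x).hasFDerivAt)
    (continuous_finsetSum _ fun j _ => continuous_partialDeriv (hvj j) j).integrableOn_Icc
  have opposite_faces (j : Fin (d + 1)) (y : Fin d → ℝ) :
      v (j.insertNth 1 y) j = v (j.insertNth 0 y) j := by
    have translate : (j.insertNth 1 y : Fin (d + 1) → ℝ) = j.insertNth 0 y + Pi.single j 1 := by
      ext k
      refine j.succAboveCases ?_ (fun k => ?_) k <;> simp
    rw [translate, hvp j]
  refine gauss.trans (Finset.sum_eq_zero fun j _ => sub_eq_zero.2 ?_)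
  simp only [Pi.zero_apply, Pi.one_apply, opposite_faces]

lemma integral_partialDeriv_eq_zero {f : (Fin d → ℝ) → ℝ} (hf : ContDiff ℝ 1 f)
    (hfp : UnitPeriodic f) (i : Fin d) : ∫ x in Icc 0 1, partialDeriv i f x = 0 := by
  have divergence_single (x : Fin d → ℝ) :
      divergence (fun y => Pi.single i (f y)) x = partialDeriv i f x := by
    refine (Finset.sum_eq_single i (fun j _ hj => ?_) (by simp)).trans ?_
    · simp [hj, partialDeriv]
    · simp only [Pi.single_eq_same]
  have hsingle : ContDiff ℝ 1 fun y => (Pi.single i (f y) : Fin d → ℝ) :=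
    (ContinuousLinearMap.single ℝ (fun _ : Fin d => ℝ) i).contDiff.comp hf
  simp only [← divergence_single]
  exact integral_divergence_eq_zero hsingle fun j x => congrArg (Pi.single i) (hfp j x)

lemma integral_mul_partialDeriv {f g : (Fin d → ℝ) → ℝ} (hf : ContDiff ℝ 1 f)
    (hg : ContDiff ℝ 1 g) (hfp : UnitPeriodic f) (hgp : UnitPeriodic g) (i : Fin d) :
    ∫ x in Icc 0 1, f x * partialDeriv i g x = -∫ x in Icc 0 1, partialDeriv i f x * g x := by
  have hint : IntegrableOn (fun x => f x * partialDeriv i g x) (Icc 0 1) :=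
    (hf.continuous.mul (continuous_partialDeriv hg i)).integrableOn_Icc
  have hint' : IntegrableOn (fun x => partialDeriv i f x * g x) (Icc 0 1) :=
    ((continuous_partialDeriv hf i).mul hg.continuous).integrableOn_Icc
  rw [← add_eq_zero_iff_eq_neg, ← integral_add hint hint',
    ← integral_partialDeriv_eq_zero (hf.mul hg) (fun j => (hfp j).mul (hgp j)) i]
  congr 1 with x
  exact (partialDeriv_mul (hf.differentiable one_ne_zero x)
    (hg.differentiable one_ne_zero x) i).symm

lemma integral_sum_mul_partialDeriv_eq_zero {v : (Fin d → ℝ) → Fin d → ℝ} {f : (Fin d → ℝ) → ℝ}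
    (hv : ContDiff ℝ 1 v) (hvp : UnitPeriodic v) (hdiv : ∀ x, divergence v x = 0)
    (hf : ContDiff ℝ 1 f) (hfp : UnitPeriodic f) :
    ∫ x in Icc 0 1, ∑ j, v x j * partialDeriv j f x = 0 := by
  have hfvp : UnitPeriodic fun y => f y • v y := fun j x => congrArg₂ (· • ·) (hfp j x) (hvp j x)
  rw [← integral_divergence_eq_zero (hf.smul hv) hfvp]
  congr 1 with x
  have product_rule (j : Fin d) : partialDeriv j (fun y => (f y • v y) j) x =
      f x * partialDeriv j (fun y => v y j) x + partialDeriv j f x * v x j :=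
    partialDeriv_mul (hf.differentiable one_ne_zero x)
      ((contDiff_pi.1 hv j).differentiable one_ne_zero x) j
  change _ = ∑ j, partialDeriv j (fun y => (f y • v y) j) x
  simp only [product_rule, Finset.sum_add_distrib, ← Finset.mul_sum]
  rw [show ∑ j, partialDeriv j (fun y => v y j) x = 0 from hdiv x]
  simp only [mul_zero, zero_add, mul_comm]

/-! ### Transport by a divergence-free field -/

variable {u : ℝ → (Fin d → ℝ) → Fin d → ℝ} {f : ℝ → (Fin d → ℝ) → ℝ} {t : ℝ}

lemma hasDerivAt_time_slice (hf : ContDiff ℝ 1 (uncurry f)) (t : ℝ) (x : Fin d → ℝ) :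
    HasDerivAt (fun s => f s x) (fderiv ℝ (uncurry f) (t, x) (1, 0)) t :=
  (hf.differentiable one_ne_zero (t, x)).hasFDerivAt.comp_hasDerivAt (f := fun s => (s, x)) t
    ((hasDerivAt_id' t).prodMk (hasDerivAt_const t x))

lemma continuous_deriv_time_slice (hf : ContDiff ℝ 1 (uncurry f)) :
    Continuous (uncurry fun t x => deriv (fun s => f s x) t) := by
  simp only [fun t x => (hasDerivAt_time_slice hf t x).deriv]
  exact (hf.continuous_fderiv one_ne_zero).clm_apply continuous_const

lemma contDiff_space_slice {n : WithTop ℕ∞} {G : Type*} [NormedAddCommGroup G] [NormedSpace ℝ G]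
    {f : ℝ → (Fin d → ℝ) → G} (hf : ContDiff ℝ n (uncurry f)) (t : ℝ) : ContDiff ℝ n (f t) :=
  hf.comp (contDiff_prodMk_right t)

lemma materialDeriv_comp {φ : ℝ → ℝ} {φ' : ℝ} {x : Fin d → ℝ} (hφ : HasDerivAt φ φ' (f t x))
    (hf : ContDiff ℝ 1 (uncurry f)) :
    materialDeriv u (fun s y => φ (f s y)) t x = φ' * materialDeriv u f t x := by
  have time_deriv : deriv (fun s => φ (f s x)) t = φ' * deriv (fun s => f s x) t :=
    (hφ.comp t (hasDerivAt_time_slice hf t x).differentiableAt.hasDerivAt).deriv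
  have space_deriv (j : Fin d) :
      partialDeriv j (fun y => φ (f t y)) x = φ' * partialDeriv j (f t) x :=
    partialDeriv_comp hφ ((contDiff_space_slice hf t).differentiable one_ne_zero x) j
  simp only [materialDeriv, time_deriv, space_deriv, mul_add, Finset.mul_sum, mul_left_comm]

lemma hasDerivAt_integral_materialDeriv (hu : ContDiff ℝ 1 (u t)) (hup : UnitPeriodic (u t))
    (hdiv : ∀ x, divergence (u t) x = 0) (hf : ContDiff ℝ 1 (uncurry f))
    (hfp : UnitPeriodic (f t)) :
    HasDerivAt (fun s => ∫ x in Icc 0 1, f s x) (∫ x in Icc 0 1, materialDeriv u f t x) t := by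
  have hft : ContDiff ℝ 1 (f t) := contDiff_space_slice hf t
  have hderiv_int : IntegrableOn (fun x => deriv (fun s => f s x) t) (Icc (0 : Fin d → ℝ) 1) :=
    ((continuous_deriv_time_slice hf).comp (Continuous.prodMk_right t)).integrableOn_Icc
  have htransport_int :
      IntegrableOn (fun x => ∑ j, u t x j * partialDeriv j (f t) x) (Icc (0 : Fin d → ℝ) 1) :=
    (continuous_finsetSum _ fun j _ => (contDiff_pi.1 hu j).continuous.mul
      (continuous_partialDeriv hft j)).integrableOn_Icc
  refine (hasDerivAt_setIntegral_of_continuous isCompact_Icc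
    (fun s => (contDiff_space_slice hf s).continuous) (continuous_deriv_time_slice hf)
    (fun s x => (hasDerivAt_time_slice hf s x).differentiableAt.hasDerivAt) t).congr_deriv ?_
  simp only [materialDeriv]
  rw [integral_add hderiv_int htransport_int,
    integral_sum_mul_partialDeriv_eq_zero hu hup hdiv hft hfp, add_zero]

lemma hasDerivAt_integral_comp {φ φ' : ℝ → ℝ} (hφ : ContDiff ℝ 1 φ)
    (hφ' : ∀ y, HasDerivAt φ (φ' y) y) (hu : ContDiff ℝ 1 (u t)) (hup : UnitPeriodic (u t))
    (hdiv : ∀ x, divergence (u t) x = 0) (hf : ContDiff ℝ 1 (uncurry f))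
    (hfp : UnitPeriodic (f t)) :
    HasDerivAt (fun s => ∫ x in Icc 0 1, φ (f s x))
      (∫ x in Icc 0 1, φ' (f t x) * materialDeriv u f t x) t := by
  simp only [← fun x => materialDeriv_comp (u := u) (hφ' (f t x)) hf]
  exact hasDerivAt_integral_materialDeriv hu hup hdiv (hφ.comp hf) fun j => (hfp j).comp φ

lemma integral_comp_eq_of_materialDeriv_eq_zero {φ : ℝ → ℝ} (hφ : ContDiff ℝ 1 φ) {T : ℝ}
    (hu : ∀ t, ContDiff ℝ 1 (u t)) (hup : ∀ t, UnitPeriodic (u t))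
    (hdiv : ∀ t x, divergence (u t) x = 0) (hf : ContDiff ℝ 1 (uncurry f))
    (hfp : ∀ t, UnitPeriodic (f t)) (htransport : ∀ t ∈ Icc 0 T, ∀ x, materialDeriv u f t x = 0)
    (ht : t ∈ Icc 0 T) :
    ∫ x in Icc 0 1, φ (f t x) = ∫ x in Icc 0 1, φ (f 0 x) := by
  have hderiv (s : ℝ) := hasDerivAt_integral_comp hφ
    (fun y => (hφ.differentiable one_ne_zero y).hasDerivAt) (hu s) (hup s) (hdiv s) hf (hfp s)
  refine constant_of_has_deriv_right_zero
    (fun s _ => (hderiv s).continuousAt.continuousWithinAt) (fun s hs => ?_) t ht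
  simpa only [htransport s (Ico_subset_Icc_self hs), mul_zero, integral_zero]
    using (hderiv s).hasDerivWithinAt

/-! ### Energy estimate -/

lemma neg_mul_add_le_sq_div {ν : ℝ} (hν : 0 < ν) (a b : ℝ) :
    -(a * (ν * a + b)) ≤ b ^ 2 / (4 * ν) := by
  rw [le_div_iff₀ (by positivity)]
  linarith [sq_nonneg (2 * ν * a + b)]

variable {w g : (Fin d → ℝ) → ℝ} {ν : ℝ}

lemma integral_abs_rpow_mul_forcing_le {r : ℝ} (hr : 0 ≤ r) (hν : 0 < ν) (hw : ContDiff ℝ 2 w)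
    (hg : ContDiff ℝ 1 g) (hwp : UnitPeriodic w) (hgp : UnitPeriodic g) (i : Fin d) :
    ∫ x in Icc 0 1, |w x| ^ r * w x *
        (ν * partialDeriv i (partialDeriv i w) x + partialDeriv i g x) ≤
      (r + 1) / (4 * ν) * ∫ x in Icc 0 1, |w x| ^ r * g x ^ 2 := by
  have hw₁ : ContDiff ℝ 1 w := hw.of_le one_le_two
  have hdw : ContDiff ℝ 1 (partialDeriv i w) := contDiff_partialDeriv hw i
  have hψ : ContDiff ℝ 1 fun x => |w x| ^ r * w x := (contDiff_abs_rpow_mul_self hr).comp hw₁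
  have hflux : ContDiff ℝ 1 fun x => ν * partialDeriv i w x + g x :=
    (contDiff_const.mul hdw).add hg
  have partialDeriv_flux (x : Fin d → ℝ) :
      partialDeriv i (fun y => ν * partialDeriv i w y + g y) x =
        ν * partialDeriv i (partialDeriv i w) x + partialDeriv i g x := by
    have hdwx := hdw.differentiable one_ne_zero x
    rw [partialDeriv_add (hdwx.const_mul ν) (hg.differentiable one_ne_zero x),
      partialDeriv_const_mul ν hdwx]
  have partialDeriv_ψ (x : Fin d → ℝ) :
      partialDeriv i (fun y => |w y| ^ r * w y) x = (r + 1) * |w x| ^ r * partialDeriv i w x :=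
    partialDeriv_comp (hasDerivAt_abs_rpow_mul_self hr (w x)) (hw₁.differentiable one_ne_zero x) i
  have by_parts := integral_mul_partialDeriv hψ hflux (fun j => (hwp j).comp fun y => |y| ^ r * y)
    (fun j => ((hwp.partialDeriv i j).comp (ν * ·)).add (hgp j)) i
  simp only [partialDeriv_flux, partialDeriv_ψ] at by_parts
  have : Continuous fun x => |w x| ^ r := (continuous_abs_rpow hr).comp hw.continuous
  have := hg.continuous
  have := hdw.continuous
  rw [by_parts, ← integral_neg, ← integral_const_mul]
  refine setIntegral_mono (Continuous.integrableOn_Icc (by fun_prop))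
    (Continuous.integrableOn_Icc (by fun_prop)) fun x => ?_
  have young := mul_le_mul_of_nonneg_left (neg_mul_add_le_sq_div hν (partialDeriv i w x) (g x))
    (by positivity : 0 ≤ (r + 1) * |w x| ^ r)
  calc -((r + 1) * |w x| ^ r * partialDeriv i w x * (ν * partialDeriv i w x + g x))
      = (r + 1) * |w x| ^ r * -(partialDeriv i w x * (ν * partialDeriv i w x + g x)) := by ring
    _ ≤ (r + 1) * |w x| ^ r * (g x ^ 2 / (4 * ν)) := young
    _ = (r + 1) / (4 * ν) * (|w x| ^ r * g x ^ 2) := by ring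

lemma integral_abs_rpow_mul_forcing_le_Lp {p : ℝ} (hp : 2 ≤ p) (hν : 0 < ν)
    (hw : ContDiff ℝ 2 w) (hg : ContDiff ℝ 1 g) (hwp : UnitPeriodic w) (hgp : UnitPeriodic g)
    (i : Fin d) :
    ∫ x in Icc 0 1, |w x| ^ (p - 2) * w x *
        (ν * partialDeriv i (partialDeriv i w) x + partialDeriv i g x) ≤
      (p - 1) / (4 * ν) * ((∫ x in Icc 0 1, |w x| ^ p) ^ (1 - 2 / p) *
        (∫ x in Icc 0 1, |g x| ^ p) ^ (2 / p)) := by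
  have hp₀ : 0 < p := by linarith
  have hcoeff : 0 ≤ (p - 1) / (4 * ν) := div_nonneg (by linarith) (by positivity)
  have forcing := integral_abs_rpow_mul_forcing_le (sub_nonneg.2 hp) hν hw hg hwp hgp i
  have holder := integral_abs_rpow_mul_abs_rpow_le two_pos hp
    (memLp_Icc_of_continuous (μ := volume) hp₀ hw.continuous 0 1)
    (memLp_Icc_of_continuous hp₀ hg.continuous 0 1)
  simp only [Real.rpow_two, sq_abs] at holder
  rw [show p - 2 + 1 = p - 1 by ring] at forcing
  exact forcing.trans (mul_le_mul_of_nonneg_left holder hcoeff)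

lemma two_div_mul_integral_abs_rpow_mul_le {p : ℝ} (hp : 2 ≤ p) (hν : 0 < ν) (hw : ContDiff ℝ 2 w)
    (hg : ContDiff ℝ 1 g) (hwp : UnitPeriodic w) (hgp : UnitPeriodic g) {i : Fin d}
    {w' : (Fin d → ℝ) → ℝ}
    (hw' : ∀ x, w' x = ν * partialDeriv i (partialDeriv i w) x + partialDeriv i g x) :
    2 / p * ∫ x in Icc 0 1, p * |w x| ^ (p - 2) * w x * w' x ≤
      (p - 1) / (2 * ν) * (∫ x in Icc 0 1, |g x| ^ p) ^ (2 / p) *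
        (∫ x in Icc 0 1, |w x| ^ p) ^ (1 - 2 / p) := by
  have hp₀ : p ≠ 0 := by linarith
  have forcing := integral_abs_rpow_mul_forcing_le_Lp hp hν hw hg hwp hgp i
  simp only [← hw'] at forcing
  calc 2 / p * ∫ x in Icc 0 1, p * |w x| ^ (p - 2) * w x * w' x
      = 2 * ∫ x in Icc 0 1, |w x| ^ (p - 2) * w x * w' x := by
        simp only [mul_assoc p, integral_const_mul]
        rw [← mul_assoc, div_mul_cancel₀ _ hp₀]
    _ ≤ 2 * ((p - 1) / (4 * ν) * ((∫ x in Icc 0 1, |w x| ^ p) ^ (1 - 2 / p) *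
          (∫ x in Icc 0 1, |g x| ^ p) ^ (2 / p))) :=
        mul_le_mul_of_nonneg_left forcing zero_le_two
    _ = (p - 1) / (2 * ν) * (∫ x in Icc 0 1, |g x| ^ p) ^ (2 / p) *
          (∫ x in Icc 0 1, |w x| ^ p) ^ (1 - 2 / p) := by ring

end Torus

theorem stmt11_general {d : ℕ} (i : Fin d) {T ν p : ℝ} (hν : 0 < ν) (hp : 2 ≤ p)
    {u : ℝ → (Fin d → ℝ) → Fin d → ℝ} {ω θ : ℝ → (Fin d → ℝ) → ℝ}
    (hu : ∀ t, ContDiff ℝ 1 (u t)) (hω : ContDiff ℝ 1 (uncurry ω))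
    (hω₂ : ∀ t, ContDiff ℝ 2 (ω t)) (hθ : ContDiff ℝ 1 (uncurry θ))
    (hup : ∀ t, UnitPeriodic (u t)) (hωp : ∀ t, UnitPeriodic (ω t))
    (hθp : ∀ t, UnitPeriodic (θ t)) (hdiv : ∀ t x, divergence (u t) x = 0)
    (hvort : ∀ t ∈ Icc 0 T, ∀ x, materialDeriv u ω t x =
      ν * partialDeriv i (partialDeriv i (ω t)) x + partialDeriv i (θ t) x)
    (htheta : ∀ t ∈ Icc 0 T, ∀ x, materialDeriv u θ t x = 0) {t : ℝ} (ht : t ∈ Icc 0 T) :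
    (∫ x in Icc 0 1, |ω t x| ^ p) ^ (2 / p) ≤ (∫ x in Icc 0 1, |ω 0 x| ^ p) ^ (2 / p) +
      (p - 1) / (2 * ν) * (∫ x in Icc 0 1, |θ 0 x| ^ p) ^ (2 / p) * t := by
  have hp₀ : 0 < p := by linarith
  have hp₁ : 1 < p := by linarith
  have hφ : ContDiff ℝ 1 fun y : ℝ => |y| ^ p := contDiff_abs_rpow hp₁
  have energy_deriv (s : ℝ) := hasDerivAt_integral_comp hφ
    (fun y => hasDerivAt_abs_rpow y hp₁) (hu s) (hup s) (hdiv s) hω (hωp s)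
  have θ_conserved (s : ℝ) (hs : s ∈ Icc 0 T) :
      ∫ x in Icc 0 1, |θ s x| ^ p = ∫ x in Icc 0 1, |θ 0 x| ^ p :=
    integral_comp_eq_of_materialDeriv_eq_zero hφ hu hup hdiv hθ hθp htheta hs
  have energy_growth (s : ℝ) (hs : s ∈ Ioo 0 t) :
      2 / p * ∫ x in Icc 0 1, p * |ω s x| ^ (p - 2) * ω s x * materialDeriv u ω s x ≤
        (p - 1) / (2 * ν) * (∫ x in Icc 0 1, |θ 0 x| ^ p) ^ (2 / p) *
          (∫ x in Icc 0 1, |ω s x| ^ p) ^ (1 - 2 / p) := by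
    have hsT : s ∈ Icc 0 T := ⟨hs.1.le, hs.2.le.trans ht.2⟩
    rw [← θ_conserved s hsT]
    exact two_div_mul_integral_abs_rpow_mul_le hp hν (hω₂ s) (contDiff_space_slice hθ s) (hωp s)
      (hθp s) (hvort s hsT)
  have hK : 0 ≤ (p - 1) / (2 * ν) * (∫ x in Icc 0 1, |θ 0 x| ^ p) ^ (2 / p) :=
    mul_nonneg (div_nonneg (by linarith) (by positivity))
      (Real.rpow_nonneg (integral_abs_rpow_nonneg _ _) _)
  simpa only [sub_zero] using rpow_le_rpow_add_mul_of_nonneg ht.1 (by positivity)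
    ((div_le_one hp₀).2 hp) hK (fun s _ => (energy_deriv s).continuousAt.continuousWithinAt)
    (fun s _ => energy_deriv s) (fun s _ => integral_abs_rpow_nonneg (ω s) p) energy_growth

lemma lpNorm_sq (p : ℝ) (f : (Fin 2 → ℝ) → ℝ) :
    lpNorm p f ^ 2 = (∫ x in Icc 0 1, |f x| ^ p) ^ (2 / p) := by
  rw [_root_.lpNorm, Q2, ← Real.rpow_mul_natCast (integral_abs_rpow_nonneg f p), Nat.cast_ofNat,
    one_div_mul_eq_div]

theorem stmt11
    (T ν p : ℝ) (hT : 0 < T) (hν : 0 < ν) (hp : 2 ≤ p)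
    (u : ℝ → (Fin 2 → ℝ) → (Fin 2 → ℝ)) (ω θ : ℝ → (Fin 2 → ℝ) → ℝ)
    (hu : ContDiff ℝ (⊤ : ℕ∞) (fun q : ℝ × (Fin 2 → ℝ) => u q.1 q.2))
    (hω : ContDiff ℝ (⊤ : ℕ∞) (fun q : ℝ × (Fin 2 → ℝ) => ω q.1 q.2))
    (hθ : ContDiff ℝ (⊤ : ℕ∞) (fun q : ℝ × (Fin 2 → ℝ) => θ q.1 q.2))
    (hup : ∀ t i, Periodic2 (fun x => u t x i))
    (hωp : ∀ t, Periodic2 (ω t)) (hθp : ∀ t, Periodic2 (θ t))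
    (hdiv : ∀ t x, ∑ j : Fin 2, pd j (fun y => u t y j) x = 0)
    (hvort : ∀ t ∈ Set.Icc (0 : ℝ) T, ∀ x,
      deriv (fun s => ω s x) t + ∑ j : Fin 2, u t x j * pd j (ω t) x
        = ν * pd 0 (pd 0 (ω t)) x + pd 0 (θ t) x)
    (htheta : ∀ t ∈ Set.Icc (0 : ℝ) T, ∀ x,
      deriv (fun s => θ s x) t + ∑ j : Fin 2, u t x j * pd j (θ t) x = 0) :
    ∀ t ∈ Set.Icc (0 : ℝ) T,
      lpNorm p (ω t) ^ 2
        ≤ lpNorm p (ω 0) ^ 2 + ((p - 1) / (2 * ν)) * lpNorm p (θ 0) ^ 2 * t := by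
  simpa only [lpNorm_sq] using fun t => stmt11_general 0 hν hp
    (fun t => (contDiff_space_slice hu t).of_le (mod_cast le_top)) (hω.of_le (mod_cast le_top))
    (fun t => (contDiff_space_slice hω t).of_le (WithTop.coe_le_coe.2 le_top))
    (hθ.of_le (mod_cast le_top))
    (fun t j x => funext fun i => (hup t i).unitPeriodic j x) (fun t => (hωp t).unitPeriodic)
    (fun t => (hθp t).unitPeriodic) hdiv hvort htheta
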